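/- Let the setting be type A_N or type B_N and let (i,k) ∈ X. Suppose p and p′ are paths in P_{i,k} such that p is weakly below p′ and p ≠ p′. Then there exists (j,ℓ) ∈ W such that p can be raised at (j,ℓ) and the raised path p𝒜_{j,ℓ} is weakly below p′. -/

import Mathlib

namespace Paper

/-- The ambient setting: type `A N` (with `N ≥ 1`) or type `B N ε`
(with `N ≥ 2` and `0 < ε < 1/2`). -/
inductive Setting where
  | A (N : ℕ)
  | B (N : ℕ) (ε : ℝ)

namespace Setting

/-- The rank `N`. -/
def N : Setting → ℕ
  | A n => n
  | B n _ => n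

/-- Validity of the parameters of the setting. -/
def valid : Setting → Prop
  | A n => 1 ≤ n
  | B n ε => 2 ≤ n ∧ 0 < ε ∧ ε < 1 / 2

end Setting

/-- The numbers `r_i` : in type A all equal `1`; in type B, `r_N = 1` and `r_i = 2` for `i < N`. -/
def rr : Setting → ℕ → ℕ
  | .A _, _ => 1
  | .B n _, j => if j = n then 1 else 2

/-- The set `X` in type `A_N`. -/
def XA (n : ℕ) : Set (ℕ × ℤ) :=
  {ik | 1 ≤ ik.1 ∧ ik.1 ≤ n ∧ ((ik.1 : ℤ) - ik.2) % 2 = 1}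

/-- The set `X` in type `B_N`. -/
def XB (n : ℕ) : Set (ℕ × ℤ) :=
  {ik | (ik.1 = n ∧ ik.2 % 2 = 1) ∨ (1 ≤ ik.1 ∧ ik.1 < n ∧ ik.2 % 2 = 0)}

/-- The set `X ⊆ I × ℤ`. -/
def X : Setting → Set (ℕ × ℤ)
  | .A n => XA n
  | .B n _ => XB n

/-- The set `W = {(i,k) : (i, k - r_i) ∈ X}`. -/
def W (S : Setting) : Set (ℕ × ℤ) :=
  {ik | (ik.1, ik.2 - (rr S ik.1 : ℤ)) ∈ X S}

/-- The `r`-th point of a path (a finite list of points of the plane). -/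
def pt (p : List (ℝ × ℝ)) (r : ℕ) : ℝ × ℝ := p.getD r (0, 0)

/-- The set of paths `𝒫_{i,k}` in type `A_N`. -/
def pathsA (n : ℕ) (i : ℕ) (k : ℤ) : Set (List (ℝ × ℝ)) :=
  {p | p.length = n + 2 ∧
    (∀ r, r < n + 2 → (pt p r).1 = (r : ℝ)) ∧
    (pt p 0).2 = (i : ℝ) + (k : ℝ) ∧
    (pt p (n + 1)).2 = (n : ℝ) + 1 - (i : ℝ) + (k : ℝ) ∧
    (∀ r, r ≤ n → (pt p (r + 1)).2 - (pt p r).2 = 1 ∨ (pt p (r + 1)).2 - (pt p r).2 = -1)}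

/-- The set of paths `𝒫_{N,ℓ}` in type `B_N`. -/
def pathsBspin (n : ℕ) (ε : ℝ) (l : ℤ) : Set (List (ℝ × ℝ)) :=
  {p | p.length = n + 1 ∧
    (if l % 4 = 3 then ∀ r, r < n → (pt p r).1 = 2 * (r : ℝ)
     else ∀ r, r < n → (pt p r).1 = 4 * (n : ℝ) - 2 - 2 * (r : ℝ)) ∧
    (pt p n).1 = 2 * (n : ℝ) - 1 ∧
    (pt p 0).2 = (l : ℝ) + 2 * (n : ℝ) - 1 ∧
    (∀ r, r + 2 ≤ n → (pt p (r + 1)).2 - (pt p r).2 = 2 ∨ (pt p (r + 1)).2 - (pt p r).2 = -2) ∧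
    ((pt p n).2 - (pt p (n - 1)).2 = 1 + ε ∨ (pt p n).2 - (pt p (n - 1)).2 = -(1 + ε))}

/-- The set of paths `𝒫_{i,k}` in type `B_N`. -/
def pathsB (n : ℕ) (ε : ℝ) (i : ℕ) (k : ℤ) : Set (List (ℝ × ℝ)) :=
  if i = n then pathsBspin n ε k
  else {p | ∃ a b : List (ℝ × ℝ),
    a ∈ pathsBspin n ε (k - (2 * (n : ℤ) - 2 * (i : ℤ) - 1)) ∧
    b ∈ pathsBspin n ε (k + (2 * (n : ℤ) - 2 * (i : ℤ) - 1)) ∧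
    p = a ++ b.reverse ∧
    (pt a n).1 = (pt b n).1 ∧ 0 < (pt a n).2 - (pt b n).2}

/-- The set of paths `𝒫_{i,k}`. -/
def P : Setting → ℕ → ℤ → Set (List (ℝ × ℝ))
  | .A n => pathsA n
  | .B n ε => pathsB n ε

/-- The map `ι : X → ℤ × ℤ` of type `B_N`. -/
def iotaB (n : ℕ) (ik : ℕ × ℤ) : ℤ × ℤ :=
  if ik.1 = n then (2 * (n : ℤ) - 1, ik.2)
  else if (2 * (n : ℤ) + ik.2 - 2 * (ik.1 : ℤ)) % 4 = 2 then (2 * (ik.1 : ℤ), ik.2)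
  else (4 * (n : ℤ) - 2 - 2 * (ik.1 : ℤ), ik.2)

/-- The corners of a path: `Cp S p true` is the set `C_{p,+}` of upper corners, and
`Cp S p false` is the set `C_{p,-}` of lower corners. -/
def Cp (S : Setting) (p : List (ℝ × ℝ)) (up : Bool) : Set (ℕ × ℤ) :=
  match S with
  | .A n =>
    {jl | 1 ≤ jl.1 ∧ jl.1 ≤ n ∧
      pt p jl.1 = ((jl.1 : ℝ), (jl.2 : ℝ)) ∧
      (pt p (jl.1 - 1)).2 = (jl.2 : ℝ) + (if up then 1 else -1) ∧
      (pt p (jl.1 + 1)).2 = (jl.2 : ℝ) + (if up then 1 else -1)}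
  | .B n ε =>
    {jl | jl ∈ XB n ∧
      ((∃ r : ℕ, 1 ≤ r ∧ r + 1 < p.length ∧
          pt p r = (((iotaB n jl).1 : ℝ), ((iotaB n jl).2 : ℝ)) ∧
          (iotaB n jl).1 ≠ 0 ∧ (iotaB n jl).1 ≠ 2 * (n : ℤ) - 1 ∧
          (iotaB n jl).1 ≠ 4 * (n : ℤ) - 2 ∧
          (if up then (pt p r).2 < (pt p (r - 1)).2 ∧ (pt p r).2 < (pt p (r + 1)).2
           else (pt p (r - 1)).2 < (pt p r).2 ∧ (pt p (r + 1)).2 < (pt p r).2))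
       ∨ (jl.1 = n ∧
          (if up then (2 * (n : ℝ) - 1, (jl.2 : ℝ) - ε) ∈ p ∧ (2 * (n : ℝ) - 1, (jl.2 : ℝ) + ε) ∉ p
           else (2 * (n : ℝ) - 1, (jl.2 : ℝ) + ε) ∈ p ∧ (2 * (n : ℝ) - 1, (jl.2 : ℝ) - ε) ∉ p)))}

/-- `p'` is obtained from `p` by replacing the point `q` by the point `q'`. -/
def Replace1 (p p' : List (ℝ × ℝ)) (q q' : ℝ × ℝ) : Prop :=
  ∃ r : ℕ, r < p.length ∧ pt p r = q ∧ p'.length = p.length ∧ pt p' r = q' ∧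
    ∀ s, s < p.length → s ≠ r → pt p' s = pt p s

/-- `p'` is obtained from `p` by replacing the point `q1` by `q1'` and the point `q2` by `q2'`. -/
def Replace2 (p p' : List (ℝ × ℝ)) (q1 q1' q2 q2' : ℝ × ℝ) : Prop :=
  ∃ r s : ℕ, r < p.length ∧ s < p.length ∧ r ≠ s ∧ pt p r = q1 ∧ pt p s = q2 ∧
    p'.length = p.length ∧ pt p' r = q1' ∧ pt p' s = q2' ∧
    ∀ u, u < p.length → u ≠ r → u ≠ s → pt p' u = pt p u

/-- The path `p` can be lowered at `(j, l)`: `(j, l - r_j) ∈ C_{p,+}` and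
`(j, l + r_j) ∉ C_{p,+}`. -/
def CanLower (S : Setting) (p : List (ℝ × ℝ)) (j : ℕ) (l : ℤ) : Prop :=
  (j, l - (rr S j : ℤ)) ∈ Cp S p true ∧ (j, l + (rr S j : ℤ)) ∉ Cp S p true

/-- `p'` is the result of the lowering move at `(j,l)` applied to the path `p ∈ 𝒫_{i,k}`;
written `p' = p 𝒜_{j,l}⁻¹`. -/
def LoweredTo (S : Setting) (i : ℕ) (k : ℤ) (j : ℕ) (l : ℤ)
    (p p' : List (ℝ × ℝ)) : Prop :=
  p ∈ P S i k ∧ p' ∈ P S i k ∧ CanLower S p j l ∧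
  (match S with
   | .A _ => Replace1 p p' ((j : ℝ), (l : ℝ) - 1) ((j : ℝ), (l : ℝ) + 1)
   | .B n ε =>
     if j = n then
       Replace1 p p' (2 * (n : ℝ) - 1, (l : ℝ) - 1 - ε) (2 * (n : ℝ) - 1, (l : ℝ) + 1 + ε)
     else if j = n - 1 then
       Replace2 p p'
         (((iotaB n (j, l - 2)).1 : ℝ), (l : ℝ) - 2) (((iotaB n (j, l - 2)).1 : ℝ), (l : ℝ) + 2)
         (2 * (n : ℝ) - 1, (l : ℝ) - 1 + ε) (2 * (n : ℝ) - 1, (l : ℝ) + 1 - ε)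
     else
       Replace1 p p'
         (((iotaB n (j, l - 2)).1 : ℝ), (l : ℝ) - 2) (((iotaB n (j, l - 2)).1 : ℝ), (l : ℝ) + 2))

/-- The path `p` can be raised at `(j,l)`: it is of the form `p' 𝒜_{j,l}⁻¹`. -/
def CanRaise (S : Setting) (i : ℕ) (k : ℤ) (p : List (ℝ × ℝ)) (j : ℕ) (l : ℤ) : Prop :=
  ∃ p', LoweredTo S i k j l p' p

/-- The monomial group `ℳ`, realised as exponent functions: the free abelian group on the
symbols `Y_{i,k}`, `(i,k) ∈ X`, is identified with finitely supported functions `(ℕ × ℤ) → ℤ`,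
written additively. -/
def Y (x : ℕ × ℤ) : (ℕ × ℤ) → ℤ := fun z => if z = x then 1 else 0

noncomputable def ind (s : Prop) : ℤ := @ite ℤ s (Classical.propDecidable s) 1 0

/-- The monomial `m(p)` of a path: `∏ Y_{j,l}` over upper corners times `∏ Y_{j,l}⁻¹`
over lower corners. -/
noncomputable def mon (S : Setting) (p : List (ℝ × ℝ)) : (ℕ × ℤ) → ℤ :=
  fun x => ind (x ∈ Cp S p true) - ind (x ∈ Cp S p false)

/-- The monomials `A_{j,l}`, with the conventions `Y_{0,·} = Y_{N+1,·} = 1`. -/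
def Amon (S : Setting) (j : ℕ) (l : ℤ) : (ℕ × ℤ) → ℤ :=
  match S with
  | .A n =>
      Y (j, l + 1) + Y (j, l - 1) - (if j = 1 then 0 else Y (j - 1, l))
        - (if j = n then 0 else Y (j + 1, l))
  | .B n _ =>
      if j = n then Y (n, l + 1) + Y (n, l - 1) - Y (n - 1, l)
      else if j = n - 1 then
        Y (n - 1, l + 2) + Y (n - 1, l - 2) - (if j = 1 then 0 else Y (n - 2, l))
          - Y (n, l + 1) - Y (n, l - 1)
      else
        Y (j, l + 2) + Y (j, l - 2) - (if j = 1 then 0 else Y (j - 1, l)) - Y (j + 1, l)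

/-- A monomial is dominant iff all its exponents are nonnegative. -/
def Dominant (m : (ℕ × ℤ) → ℤ) : Prop := ∀ x, 0 ≤ m x

/-- A monomial is anti-dominant iff all its exponents are nonpositive. -/
def AntiDominant (m : (ℕ × ℤ) → ℤ) : Prop := ∀ x, m x ≤ 0

/-- `(i',k')` is in snake position with respect to `(i,k)`. -/
def SnakePos : Setting → ℕ × ℤ → ℕ × ℤ → Prop
  | .A _, ik, ik' => |(ik'.1 : ℤ) - (ik.1 : ℤ)| + 2 ≤ ik'.2 - ik.2
  | .B n _, ik, ik' =>
      if ik.1 = n ∧ ik'.1 = n then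
        2 ≤ ik'.2 - ik.2 ∧ (ik'.2 - ik.2) % 4 = 2
      else if ik.1 = n ∨ ik'.1 = n then
        2 * |(ik'.1 : ℤ) - (ik.1 : ℤ)| + 3 ≤ ik'.2 - ik.2 ∧
          (ik'.2 - ik.2) % 4 = (2 * |(ik'.1 : ℤ) - (ik.1 : ℤ)| - 1) % 4
      else
        2 * |(ik'.1 : ℤ) - (ik.1 : ℤ)| + 4 ≤ ik'.2 - ik.2 ∧
          (ik'.2 - ik.2) % 4 = (2 * |(ik'.1 : ℤ) - (ik.1 : ℤ)|) % 4

/-- A snake: a sequence of points of `X`, each in snake position w.r.t. the previous one. -/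
def IsSnake (S : Setting) {T : ℕ} (w : Fin T → ℕ × ℤ) : Prop :=
  (∀ t, w t ∈ X S) ∧
  ∀ (t : Fin T) (h : (t : ℕ) + 1 < T), SnakePos S (w t) (w ⟨(t : ℕ) + 1, h⟩)

/-- `p` is strictly above `p'`. -/
def StrictlyAbove (p p' : List (ℝ × ℝ)) : Prop :=
  ∀ a ∈ p, ∀ b ∈ p', a.1 = b.1 → a.2 < b.2

/-- A tuple of paths is non-overlapping. -/
def NonOverlapping {T : ℕ} (ps : Fin T → List (ℝ × ℝ)) : Prop :=
  ∀ s t : Fin T, s < t → StrictlyAbove (ps s) (ps t)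

/-- The set `𝒫̄` of non-overlapping tuples of paths attached to a snake. -/
def PBar (S : Setting) {T : ℕ} (w : Fin T → ℕ × ℤ) : Set (Fin T → List (ℝ × ℝ)) :=
  {ps | (∀ t, ps t ∈ P S (w t).1 (w t).2) ∧ NonOverlapping ps}

/-- The product `∏_t m(p_t)` of the monomials of a tuple of paths. -/
noncomputable def tmon (S : Setting) {T : ℕ} (ps : Fin T → List (ℝ × ℝ)) : (ℕ × ℤ) → ℤ :=
  ∑ t, mon S (ps t)

/-- Lowering move at `jl` on a tuple of paths: one component is lowered, the others
are unchanged. -/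
def TLoweredTo (S : Setting) {T : ℕ} (w : Fin T → ℕ × ℤ) (jl : ℕ × ℤ)
    (ps ps' : Fin T → List (ℝ × ℝ)) : Prop :=
  ∃ t, LoweredTo S (w t).1 (w t).2 jl.1 jl.2 (ps t) (ps' t) ∧ ∀ s, s ≠ t → ps' s = ps s

/-- Sequences of raising/lowering moves on a single path; the list records, for each move,
whether it was a lowering move (`true`) or a raising move (`false`), and its site. -/
inductive MoveSeq (S : Setting) (i : ℕ) (k : ℤ) :
    List (ℝ × ℝ) → List (ℝ × ℝ) → List (Bool × (ℕ × ℤ)) → Prop where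
  | nil (p : List (ℝ × ℝ)) : MoveSeq S i k p p []
  | lower {p q r : List (ℝ × ℝ)} {jl : ℕ × ℤ} {ms : List (Bool × (ℕ × ℤ))} :
      jl ∈ W S → LoweredTo S i k jl.1 jl.2 p q → MoveSeq S i k q r ms →
      MoveSeq S i k p r ((true, jl) :: ms)
  | raise {p q r : List (ℝ × ℝ)} {jl : ℕ × ℤ} {ms : List (Bool × (ℕ × ℤ))} :
      jl ∈ W S → LoweredTo S i k jl.1 jl.2 q p → MoveSeq S i k q r ms →
      MoveSeq S i k p r ((false, jl) :: ms)

/-- Sequences of raising/lowering moves on tuples of paths, all of whose intermediate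
tuples are non-overlapping. -/
inductive TMoveSeq (S : Setting) {T : ℕ} (w : Fin T → ℕ × ℤ) :
    (Fin T → List (ℝ × ℝ)) → (Fin T → List (ℝ × ℝ)) → List (Bool × (ℕ × ℤ)) → Prop where
  | nil (ps : Fin T → List (ℝ × ℝ)) : TMoveSeq S w ps ps []
  | lower {ps qs rs : Fin T → List (ℝ × ℝ)} {jl : ℕ × ℤ} {ms : List (Bool × (ℕ × ℤ))} :
      jl ∈ W S → TLoweredTo S w jl ps qs → NonOverlapping qs →
      TMoveSeq S w qs rs ms → TMoveSeq S w ps rs ((true, jl) :: ms)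
  | raise {ps qs rs : Fin T → List (ℝ × ℝ)} {jl : ℕ × ℤ} {ms : List (Bool × (ℕ × ℤ))} :
      jl ∈ W S → TLoweredTo S w jl qs ps → NonOverlapping qs →
      TMoveSeq S w qs rs ms → TMoveSeq S w ps rs ((false, jl) :: ms)

/-- Sequences of lowering moves on tuples of paths, all of whose intermediate tuples
are non-overlapping; the list records the sites, in order. -/
inductive TLowerSeq (S : Setting) {T : ℕ} (w : Fin T → ℕ × ℤ) :
    (Fin T → List (ℝ × ℝ)) → (Fin T → List (ℝ × ℝ)) → List (ℕ × ℤ) → Prop where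
  | nil (ps : Fin T → List (ℝ × ℝ)) : TLowerSeq S w ps ps []
  | cons {ps qs rs : Fin T → List (ℝ × ℝ)} {jl : ℕ × ℤ} {ms : List (ℕ × ℤ)} :
      jl ∈ W S → TLoweredTo S w jl ps qs → NonOverlapping qs →
      TLowerSeq S w qs rs ms → TLowerSeq S w ps rs (jl :: ms)

/-- Weak order on paths with the same x-coordinates: `p` is weakly above `p'`. -/
def WeaklyAbove (p p' : List (ℝ × ℝ)) : Prop :=
  p.length = p'.length ∧ ∀ r, r < p.length → (pt p r).2 ≤ (pt p' r).2

/-- `p` is weakly below `p'`. -/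
def WeaklyBelow (p p' : List (ℝ × ℝ)) : Prop :=
  p.length = p'.length ∧ ∀ r, r < p.length → (pt p' r).2 ≤ (pt p r).2

/-- The path `top(p, p')`. -/
def topPath (p p' : List (ℝ × ℝ)) : List (ℝ × ℝ) :=
  List.zipWith (fun a b => (a.1, min a.2 b.2)) p p'

/-- The distinguished point contained in the highest path `p⁺_{i,k}`. -/
def highPoint : Setting → ℕ → ℤ → ℝ × ℝ
  | .A _, i, k => ((i : ℝ), (k : ℝ))
  | .B n ε, i, k =>
      if i = n then (2 * (n : ℝ) - 1, (k : ℝ) - ε)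
      else (((iotaB n (i, k)).1 : ℝ), ((iotaB n (i, k)).2 : ℝ))

/-- The distinguished point contained in the lowest path `p⁻_{i,k}`. -/
def lowPoint : Setting → ℕ → ℤ → ℝ × ℝ
  | .A n, i, k => ((n : ℝ) + 1 - (i : ℝ), (k : ℝ) + (n : ℝ) + 1)
  | .B n ε, i, k =>
      if i = n then (2 * (n : ℝ) - 1, (k : ℝ) + 4 * (n : ℝ) - 2 + ε)
      else (((iotaB n (i, k + 4 * (n : ℤ) - 2)).1 : ℝ),
            ((iotaB n (i, k + 4 * (n : ℤ) - 2)).2 : ℝ))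

/-- The highest path `p⁺_{i,k}` : the path of `𝒫_{i,k}` with no lower corners. -/
noncomputable def highestPath (S : Setting) (i : ℕ) (k : ℤ) : List (ℝ × ℝ) :=
  Classical.epsilon fun p => p ∈ P S i k ∧ Cp S p false = ∅

/-- The lowest path `p⁻_{i,k}` : the path of `𝒫_{i,k}` with no upper corners. -/
noncomputable def lowestPath (S : Setting) (i : ℕ) (k : ℤ) : List (ℝ × ℝ) :=
  Classical.epsilon fun p => p ∈ P S i k ∧ Cp S p true = ∅

/-!
Among the points of `p` strictly below `p'`, a lowest one, i.e. one with the largest ordinate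
(ordinates grow downwards), is a peak of the height function of `p`: a neighbour of larger ordinate
would be below `p'` as well, since both paths make steps of the same size. Reflecting this peak is
the raising move `p ↦ p𝒜_{j,ℓ}`. Heights of `p` and `p'` over a common abscissa differ by
multiples of twice the step size, so the reflected path cannot cross `p'`.

A vector path of type `B` consists of two spin paths, the first strictly below the second over the
column `2N - 1`, and the argument applies to each of them. If the second halves differ, the second
one is raised, which only widens the gap. Otherwise the first one is raised, and the gap survives
because the raised half stays weakly below the first half of `p'`, which over that column is
strictly below the common second half.
-/

/-! ### Points of a list -/

section Points

variable {p q : List (ℝ × ℝ)} {r s : ℕ} {x : ℝ × ℝ}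

theorem pt_eq_getElem (h : r < p.length) : pt p r = p[r] :=
  List.getD_eq_getElem _ _ h

theorem pt_append_left (h : r < p.length) : pt (p ++ q) r = pt p r :=
  List.getD_append _ _ _ _ h

theorem pt_append_right (h : p.length ≤ r) : pt (p ++ q) r = pt q (r - p.length) :=
  List.getD_append_right _ _ _ _ h

theorem pt_reverse (h : r < p.length) : pt p.reverse r = pt p (p.length - 1 - r) :=
  congrFun (List.getD_reverse r h) _

theorem pt_reverse_sub (hr : r < p.length) : pt p.reverse (p.length - 1 - r) = pt p r := by
  rw [pt_reverse (by omega), Nat.sub_sub_self (by omega)]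

theorem pt_set_self (h : r < p.length) : pt (p.set r x) r = x := by
  rw [pt_eq_getElem (by simpa using h), List.getElem_set_self]

theorem pt_set_of_ne (h : r ≠ s) : pt (p.set r x) s = pt p s := by
  simp only [pt, List.getD_eq_getElem?_getD, List.getElem?_set_ne h]

theorem mem_iff_exists_pt : x ∈ p ↔ ∃ r < p.length, pt p r = x := by
  rw [List.mem_iff_getElem]
  exact exists_congr fun r =>
    ⟨fun ⟨h, hx⟩ => ⟨h, by rw [pt_eq_getElem h, hx]⟩,
      fun ⟨h, hx⟩ => ⟨h, by rw [← pt_eq_getElem h, hx]⟩⟩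

theorem pt_mem (h : r < p.length) : pt p r ∈ p :=
  mem_iff_exists_pt.2 ⟨r, h, rfl⟩

theorem ext_pt (hlen : p.length = q.length) (h : ∀ r < p.length, pt p r = pt q r) : p = q :=
  List.ext_getElem hlen fun r hp hq => by
    rw [← pt_eq_getElem hp, ← pt_eq_getElem hq, h r hp]

end Points

section WeaklyBelow

variable {p p' q q' : List (ℝ × ℝ)}

theorem weaklyBelow_iff_forall₂ :
    WeaklyBelow p p' ↔ List.Forall₂ (fun x x' => x'.2 ≤ x.2) p p' := by
  rw [List.forall₂_iff_get]
  refine and_congr_right fun hlen => forall_congr' fun r => ⟨fun h hr hr' => ?_, fun h hr => ?_⟩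
  · simpa only [List.get_eq_getElem, pt_eq_getElem hr, pt_eq_getElem hr'] using h hr
  · have hr' := hlen ▸ hr
    simpa only [List.get_eq_getElem, pt_eq_getElem hr, pt_eq_getElem hr'] using h hr hr'

theorem weaklyBelow_reverse_iff : WeaklyBelow p.reverse p'.reverse ↔ WeaklyBelow p p' := by
  simp only [weaklyBelow_iff_forall₂, List.forall₂_reverse_iff]

theorem weaklyBelow_append_iff (hlen : p.length = p'.length) :
    WeaklyBelow (p ++ q) (p' ++ q') ↔ WeaklyBelow p p' ∧ WeaklyBelow q q' := by
  simp only [weaklyBelow_iff_forall₂]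
  refine ⟨fun h => ⟨?_, ?_⟩, fun h => List.rel_append h.1 h.2⟩
  · have htake := List.forall₂_take p.length h
    rwa [List.take_left, hlen, List.take_left] at htake
  · have hdrop := List.forall₂_drop p.length h
    rwa [List.drop_left, hlen, List.drop_left] at hdrop

end WeaklyBelow

/-! ### Paths with prescribed step sizes -/

theorem exists_lt_and_forall_le_of_abs_sub_le {ι α : Type*} [AddCommGroup α] [LinearOrder α]
    [IsOrderedAddMonoid α] {s : Finset ι} {f g : ι → α} (h : ∃ r ∈ s, g r < f r) :
    ∃ r ∈ s, g r < f r ∧ ∀ t ∈ s, |g t - g r| ≤ |f t - f r| → f t ≤ f r := by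
  obtain ⟨r₀, hr₀, hlt₀⟩ := h
  obtain ⟨r, hr, hmax⟩ := (s.filter fun r => g r < f r).exists_max_image f
    ⟨r₀, Finset.mem_filter.2 ⟨hr₀, hlt₀⟩⟩
  obtain ⟨hrs, hlt⟩ := Finset.mem_filter.1 hr
  refine ⟨r, hrs, hlt, fun t ht hstep => ?_⟩
  by_contra! hrt
  have hgt : g t < f t := by
    calc g t ≤ g r + |g t - g r| := sub_le_iff_le_add'.1 (le_abs_self _)
      _ ≤ g r + (f t - f r) := by
        rw [← abs_of_pos (sub_pos.2 hrt)]
        exact add_le_add_right hstep _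
      _ < f r + (f t - f r) := add_lt_add_left hlt _
      _ = f t := add_sub_cancel _ _
  exact hrt.not_ge (hmax t (Finset.mem_filter.2 ⟨ht, hgt⟩))

/-- A list of `n + 1` points with abscissae `x r` whose `r`-th step has height `± d r`. The paths
of type `A` and the spin paths of type `B` are both of this kind. -/
structure IsStepPath (x d : ℕ → ℝ) (n : ℕ) (p : List (ℝ × ℝ)) : Prop where
  length_eq : p.length = n + 1
  fst_pt : ∀ r ≤ n, (pt p r).1 = x r
  abs_step : ∀ r < n, |(pt p (r + 1)).2 - (pt p r).2| = d r

/-- The path with step sizes `d` rises into its `r`-th point and falls out of it; the last point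
is a peak as soon as the last step rises. -/
structure IsPeak (d : ℕ → ℝ) (n : ℕ) (p : List (ℝ × ℝ)) (r : ℕ) : Prop where
  pos : 0 < r
  le : r ≤ n
  rise : (pt p r).2 - (pt p (r - 1)).2 = d (r - 1)
  fall : r < n → (pt p r).2 - (pt p (r + 1)).2 = d r

/-- The path obtained from `p` by exchanging the rise `d (r - 1)` into the peak `r` with the fall
`d r` out of it, or by reversing the rise if `r` is the last index, where the outer `List.set` is
out of range and does nothing. The points beyond `r + 1` stay in place. -/
def reflectPeak (d : ℕ → ℝ) (p : List (ℝ × ℝ)) (r : ℕ) : List (ℝ × ℝ) :=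
  (p.set r ((pt p r).1, (pt p r).2 - 2 * d (r - 1))).set (r + 1)
    ((pt p (r + 1)).1, (pt p (r + 1)).2 - 2 * d (r - 1) + 2 * d r)

section ReflectPeak

variable {d : ℕ → ℝ} {p : List (ℝ × ℝ)} {r s : ℕ}

theorem length_reflectPeak : (reflectPeak d p r).length = p.length := by
  simp only [reflectPeak, List.length_set]

theorem pt_reflectPeak_self (hr : r < p.length) :
    pt (reflectPeak d p r) r = ((pt p r).1, (pt p r).2 - 2 * d (r - 1)) := by
  rw [reflectPeak, pt_set_of_ne (Nat.succ_ne_self r), pt_set_self hr]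

theorem pt_reflectPeak_succ (hr : r + 1 < p.length) :
    pt (reflectPeak d p r) (r + 1) =
      ((pt p (r + 1)).1, (pt p (r + 1)).2 - 2 * d (r - 1) + 2 * d r) :=
  pt_set_self (by simpa only [List.length_set] using hr)

theorem pt_reflectPeak_of_ne (hlt : s < p.length) (hs : s ≠ r)
    (hs' : s = r + 1 → d r = d (r - 1)) : pt (reflectPeak d p r) s = pt p s := by
  by_cases hsr : s = r + 1
  · subst hsr
    rw [pt_reflectPeak_succ hlt, hs' rfl, sub_add_cancel]
  · rw [reflectPeak, pt_set_of_ne (Ne.symm hsr), pt_set_of_ne hs.symm]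

theorem replace1_reflectPeak (hr : r < p.length) (hd : r + 1 < p.length → d r = d (r - 1)) :
    Replace1 (reflectPeak d p r) p (pt (reflectPeak d p r) r) (pt p r) := by
  refine ⟨r, by rwa [length_reflectPeak], rfl, length_reflectPeak.symm, rfl, fun s hs hsr => ?_⟩
  rw [length_reflectPeak] at hs
  exact (pt_reflectPeak_of_ne hs hsr fun h => hd (h ▸ hs)).symm

theorem replace2_reflectPeak (hr : r + 1 < p.length) :
    Replace2 (reflectPeak d p r) p (pt (reflectPeak d p r) r) (pt p r)
      (pt (reflectPeak d p r) (r + 1)) (pt p (r + 1)) := by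
  refine ⟨r, r + 1, ?_, by rwa [length_reflectPeak], r.succ_ne_self.symm, rfl, rfl,
    length_reflectPeak.symm, rfl, rfl, fun s hs hsr hsr' => ?_⟩
  · rw [length_reflectPeak]
    omega
  · rw [length_reflectPeak] at hs
    exact (pt_reflectPeak_of_ne hs hsr (absurd · hsr')).symm

end ReflectPeak

section Replace

variable {p p' : List (ℝ × ℝ)} {x x' y y' : ℝ × ℝ}

theorem Replace1.append_right (h : Replace1 p p' x x') (c : List (ℝ × ℝ)) :
    Replace1 (p ++ c) (p' ++ c) x x' := by
  obtain ⟨r, hr, hx, hlen, hx', hfix⟩ := h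
  refine ⟨r, by rw [List.length_append]; omega, (pt_append_left hr).trans hx,
    by simp only [List.length_append, hlen], (pt_append_left (hlen ▸ hr)).trans hx', ?_⟩
  intro s _ hsr
  by_cases hsp : s < p.length
  · rw [pt_append_left hsp, pt_append_left (hlen ▸ hsp), hfix s hsp hsr]
  · rw [pt_append_right (by omega), pt_append_right (by omega), hlen]

theorem Replace2.append_right (h : Replace2 p p' x x' y y') (c : List (ℝ × ℝ)) :
    Replace2 (p ++ c) (p' ++ c) x x' y y' := by
  obtain ⟨r, t, hr, ht, hrt, hx, hy, hlen, hx', hy', hfix⟩ := h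
  refine ⟨r, t, by rw [List.length_append]; omega, by rw [List.length_append]; omega, hrt,
    (pt_append_left hr).trans hx, (pt_append_left ht).trans hy,
    by simp only [List.length_append, hlen], (pt_append_left (hlen ▸ hr)).trans hx',
    (pt_append_left (hlen ▸ ht)).trans hy', ?_⟩
  intro s _ hsr hst
  by_cases hsp : s < p.length
  · rw [pt_append_left hsp, pt_append_left (hlen ▸ hsp), hfix s hsp hsr hst]
  · rw [pt_append_right (by omega), pt_append_right (by omega), hlen]

theorem Replace1.reverse (h : Replace1 p p' x x') : Replace1 p.reverse p'.reverse x x' := by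
  obtain ⟨r, hr, hx, hlen, hx', hfix⟩ := h
  refine ⟨p.length - 1 - r, by rw [List.length_reverse]; omega, (pt_reverse_sub hr).trans hx,
    by simp only [List.length_reverse, hlen],
    by rw [← hlen, pt_reverse_sub (hlen ▸ hr), hx'], fun s hs hsr => ?_⟩
  rw [List.length_reverse] at hs
  rw [pt_reverse hs, pt_reverse (hlen ▸ hs), hlen, hfix _ (by omega) (by omega)]

theorem Replace2.reverse (h : Replace2 p p' x x' y y') :
    Replace2 p.reverse p'.reverse x x' y y' := by
  obtain ⟨r, t, hr, ht, hrt, hx, hy, hlen, hx', hy', hfix⟩ := h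
  refine ⟨p.length - 1 - r, p.length - 1 - t, by rw [List.length_reverse]; omega,
    by rw [List.length_reverse]; omega, by omega, (pt_reverse_sub hr).trans hx,
    (pt_reverse_sub ht).trans hy, by simp only [List.length_reverse, hlen],
    by rw [← hlen, pt_reverse_sub (hlen ▸ hr), hx'],
    by rw [← hlen, pt_reverse_sub (hlen ▸ ht), hy'], fun s hs hsr hst => ?_⟩
  rw [List.length_reverse] at hs
  rw [pt_reverse hs, pt_reverse (hlen ▸ hs), hlen,
    hfix _ (by omega) (by omega) (by omega)]

end Replace

theorem IsPeak.reflectPeak_fall {d : ℕ → ℝ} {n r : ℕ} {p : List (ℝ × ℝ)} (hpeak : IsPeak d n p r)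
    (hr : r < p.length) :
    (pt (reflectPeak d p r) (r - 1)).2 - (pt (reflectPeak d p r) r).2 = d (r - 1) := by
  have hpos := hpeak.pos
  have hrise := hpeak.rise
  rw [pt_reflectPeak_self hr, pt_reflectPeak_of_ne (by omega) (by omega) (by omega)]
  linarith

theorem IsPeak.reflectPeak_rise {d : ℕ → ℝ} {n r : ℕ} {p : List (ℝ × ℝ)} (hpeak : IsPeak d n p r)
    (hrn : r < n) (hr : r + 1 < p.length) :
    (pt (reflectPeak d p r) (r + 1)).2 - (pt (reflectPeak d p r) r).2 = d r := by
  have hfall := hpeak.fall hrn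
  rw [pt_reflectPeak_self (by omega), pt_reflectPeak_succ hr]
  linarith

namespace IsStepPath

variable {x d : ℕ → ℝ} {n r : ℕ} {c : ℝ} {p p' : List (ℝ × ℝ)}

theorem lt_length (hp : IsStepPath x d n p) (hr : r ≤ n) : r < p.length :=
  (Nat.lt_succ_of_le hr).trans_eq hp.length_eq.symm

theorem le_of_lt_length (hp : IsStepPath x d n p) (hr : r < p.length) : r ≤ n :=
  Nat.le_of_lt_succ (hr.trans_eq hp.length_eq)

theorem snd_succ_le (hp : IsStepPath x d n p) (hr : r < n) :
    (pt p (r + 1)).2 ≤ (pt p r).2 + d r :=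
  sub_le_iff_le_add'.1 ((le_abs_self _).trans (hp.abs_step r hr).le)

theorem exists_isPeak (hp : IsStepPath x d n p) (hp' : IsStepPath x d n p')
    (h0 : (pt p 0).2 = (pt p' 0).2) (hbelow : WeaklyBelow p p') (hne : p ≠ p') :
    ∃ r, IsPeak d n p r ∧ (pt p' r).2 < (pt p r).2 := by
  have hdiff : ∃ r ∈ Finset.range (n + 1), (pt p' r).2 < (pt p r).2 := by
    by_contra! hle
    refine hne (ext_pt hbelow.1 fun r hr => Prod.ext ?_ (le_antisymm ?_ (hbelow.2 r hr)))
    · rw [hp.fst_pt r (hp.le_of_lt_length hr), hp'.fst_pt r (hp.le_of_lt_length hr)]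
    · exact hle r (Finset.mem_range_succ_iff.2 (hp.le_of_lt_length hr))
  obtain ⟨r, hr, hlt, hmax⟩ := exists_lt_and_forall_le_of_abs_sub_le hdiff
  rw [Finset.mem_range_succ_iff] at hr
  have hpos : 0 < r := Nat.pos_of_ne_zero fun h => hlt.ne' (h ▸ h0)
  obtain ⟨t, rfl⟩ := Nat.exists_eq_succ_of_ne_zero hpos.ne'
  refine ⟨t + 1, ⟨hpos, hr, ?_, fun hrn => ?_⟩, hlt⟩
  · have hle := hmax t (Finset.mem_range_succ_iff.2 (by omega)) (by
      rw [abs_sub_comm, hp'.abs_step t hr, abs_sub_comm, hp.abs_step t hr])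
    exact (abs_of_nonneg (sub_nonneg.2 hle)).symm.trans (hp.abs_step t hr)
  · have hle := hmax (t + 2) (Finset.mem_range_succ_iff.2 hrn) (by
      rw [hp'.abs_step (t + 1) hrn, hp.abs_step (t + 1) hrn])
    rw [← abs_of_nonneg (sub_nonneg.2 hle), abs_sub_comm, hp.abs_step (t + 1) hrn]

theorem exists_snd_eq (hp : IsStepPath x d n p) (hr : r ≤ n) (hd : ∀ s < r, d s = c) :
    ∃ k : ℤ, (pt p r).2 = (pt p 0).2 + c * r - 2 * c * k := by
  induction r with
  | zero => exact ⟨0, by push_cast; ring⟩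
  | succ r ih =>
    obtain ⟨k, hk⟩ := ih (by omega) fun s hs => hd s (by omega)
    have hstep := hp.abs_step r hr
    rw [hd r r.lt_succ_self] at hstep
    rcases eq_or_eq_neg_of_abs_eq hstep with hup | hdown
    · exact ⟨k, by push_cast; linarith⟩
    · exact ⟨k + 1, by push_cast; linarith⟩

theorem snd_add_le_of_lt (hp : IsStepPath x d n p) (hp' : IsStepPath x d n p')
    (h0 : (pt p 0).2 = (pt p' 0).2) (hr : r ≤ n) (hd : ∀ s < r, d s = c) (hc : 0 ≤ c)
    (hlt : (pt p' r).2 < (pt p r).2) : (pt p' r).2 + 2 * c ≤ (pt p r).2 := by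
  obtain ⟨k, hk⟩ := hp.exists_snd_eq hr hd
  obtain ⟨k', hk'⟩ := hp'.exists_snd_eq hr hd
  have hkk' : k < k' := by
    by_contra! hle
    have : 2 * c * k' ≤ 2 * c * k :=
      mul_le_mul_of_nonneg_left (Int.cast_le.2 hle) (by linarith)
    linarith
  have : 2 * c * (k + 1) ≤ 2 * c * k' :=
    mul_le_mul_of_nonneg_left (by exact_mod_cast hkk') (by linarith)
  linarith

theorem snd_le_sub_of_isPeak (hp : IsStepPath x d n p) (hp' : IsStepPath x d n p')
    (h0 : (pt p 0).2 = (pt p' 0).2) (hd : ∀ s, s + 1 < n → d s = c) (hdc : ∀ s < n, d s ≤ c)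
    (hbelow : WeaklyBelow p p') (hpeak : IsPeak d n p r) (hlt : (pt p' r).2 < (pt p r).2) :
    (pt p' r).2 ≤ (pt p r).2 - 2 * d (r - 1) := by
  obtain ⟨t, rfl⟩ := Nat.exists_eq_succ_of_ne_zero hpeak.pos.ne'
  have htn : t < n := hpeak.le
  have hrise : (pt p (t + 1)).2 - (pt p t).2 = d t := hpeak.rise
  have hstep := hp'.abs_step t htn
  change (pt p' (t + 1)).2 ≤ (pt p (t + 1)).2 - 2 * d t
  -- Either `p'` falls where `p` rises, or `p'` already is two full steps higher at `t`.
  rcases (hbelow.2 t (hp.lt_length htn.le)).eq_or_lt with heq | hlt'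
  · rcases eq_or_eq_neg_of_abs_eq hstep with hup | hdown <;> linarith
  · have hc : 0 ≤ c := ((abs_nonneg _).trans hstep.le).trans (hdc t htn)
    have hgap := hp.snd_add_le_of_lt hp' h0 htn.le (fun s hs => hd s (by omega)) hc hlt'
    have hsucc := hp'.snd_succ_le htn
    have hdt := hdc t htn
    linarith

protected theorem reflectPeak (hp : IsStepPath x d n p) (hpeak : IsPeak d n p r)
    (hd : r + 1 < n → d r = d (r - 1)) : IsStepPath x d n (reflectPeak d p r) := by
  have hrp : r < p.length := hp.lt_length hpeak.le
  have hne {s : ℕ} (hs : s ≤ n) (hsr : s ≠ r) (hs' : s = r + 1 → r + 1 < n) :=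
    pt_reflectPeak_of_ne (d := d) (hp.lt_length hs) hsr fun h => hd (hs' h)
  refine ⟨length_reflectPeak.trans hp.length_eq, fun s hs => ?_, fun s hs => ?_⟩
  · rw [← hp.fst_pt s hs]
    by_cases hsr : s = r
    · rw [hsr, pt_reflectPeak_self hrp]
    by_cases hsr' : s = r + 1
    · subst hsr'
      rw [pt_reflectPeak_succ (hp.lt_length hs)]
    · rw [hne hs hsr (absurd · hsr')]
  · have hstep := hp.abs_step s hs
    by_cases hsr : s = r
    · subst hsr
      rw [hpeak.reflectPeak_rise hs (hp.lt_length hs), ← hstep, abs_abs]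
    by_cases hsr' : s + 1 = r
    · subst hsr'
      have hfall := hpeak.reflectPeak_fall hrp
      rw [Nat.add_sub_cancel] at hfall
      rw [abs_sub_comm, hfall, ← hstep, abs_abs]
    · rw [hne hs.le hsr (by omega), hne hs hsr' (by omega), hstep]

theorem reflectPeak_weaklyBelow (hp : IsStepPath x d n p) (hp' : IsStepPath x d n p')
    (hbelow : WeaklyBelow p p') (hpeak : IsPeak d n p r)
    (hle : (pt p' r).2 ≤ (pt p r).2 - 2 * d (r - 1)) :
    WeaklyBelow (reflectPeak d p r) p' := by
  refine ⟨length_reflectPeak.trans hbelow.1, fun s hs => ?_⟩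
  rw [length_reflectPeak] at hs
  by_cases hsr : s = r
  · subst hsr
    rwa [pt_reflectPeak_self hs]
  by_cases hsr' : s = r + 1
  · subst hsr'
    have hrn : r < n := hp.le_of_lt_length hs
    have hfall := hpeak.fall hrn
    have hsucc := hp'.snd_succ_le hrn
    rw [pt_reflectPeak_succ hs]
    linarith
  · rw [pt_reflectPeak_of_ne hs hsr (absurd · hsr')]
    exact hbelow.2 s hs

theorem exists_reflectPeak_weaklyBelow (hp : IsStepPath x d n p) (hp' : IsStepPath x d n p')
    (h0 : (pt p 0).2 = (pt p' 0).2) (hd : ∀ s, s + 1 < n → d s = c) (hdc : ∀ s < n, d s ≤ c)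
    (hbelow : WeaklyBelow p p') (hne : p ≠ p') :
    ∃ r, IsPeak d n p r ∧ IsStepPath x d n (reflectPeak d p r) ∧
      (pt p' r).2 < (pt p r).2 ∧ WeaklyBelow (reflectPeak d p r) p' := by
  obtain ⟨r, hpeak, hlt⟩ := hp.exists_isPeak hp' h0 hbelow hne
  have hle := hp.snd_le_sub_of_isPeak hp' h0 hd hdc hbelow hpeak hlt
  refine ⟨r, hpeak, hp.reflectPeak hpeak fun hr => ?_, hlt,
    hp.reflectPeak_weaklyBelow hp' hbelow hpeak hle⟩
  rw [hd r hr, hd (r - 1) (by omega)]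

end IsStepPath

theorem weaklyBelow_reflectPeak {d : ℕ → ℝ} {p : List (ℝ × ℝ)} {r : ℕ} (h0 : 0 ≤ d (r - 1))
    (hle : r + 1 < p.length → d r ≤ d (r - 1)) : WeaklyBelow p (reflectPeak d p r) := by
  refine ⟨length_reflectPeak.symm, fun s hs => ?_⟩
  by_cases hsr : s = r
  · subst hsr
    rw [pt_reflectPeak_self hs]
    linarith
  by_cases hsr' : s = r + 1
  · subst hsr'
    have := hle hs
    rw [pt_reflectPeak_succ hs]
    linarith
  · rw [pt_reflectPeak_of_ne hs hsr (absurd · hsr')]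

/-! ### Type `A` -/

section TypeA

variable {n i r : ℕ} {k : ℤ} {p p' : List (ℝ × ℝ)}

theorem mem_pathsA_iff : p ∈ pathsA n i k ↔
    IsStepPath (fun r => r) (fun _ => 1) (n + 1) p ∧
      (pt p 0).2 = i + k ∧ (pt p (n + 1)).2 = n + 1 - i + k := by
  constructor
  · rintro ⟨hlen, hfst, hstart, hend, hstep⟩
    exact ⟨⟨hlen, fun r hr => hfst r (by omega), fun r hr =>
      (abs_eq zero_le_one).2 (hstep r (by omega))⟩, hstart, hend⟩
  · rintro ⟨⟨hlen, hfst, hstep⟩, hstart, hend⟩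
    exact ⟨hlen, fun r hr => hfst r (by omega), hstart, hend, fun r hr =>
      (abs_eq zero_le_one).1 (hstep r (by omega))⟩

theorem loweredTo_reflectPeak_A {z : ℤ} (hp : p ∈ pathsA n i k)
    (hq : reflectPeak (fun _ => 1) p r ∈ pathsA n i k) (hpeak : IsPeak (fun _ => 1) (n + 1) p r)
    (hr : r ≤ n) (hz : pt p r = ((r : ℝ), (z : ℝ))) :
    LoweredTo (.A n) i k r (z - 1) (reflectPeak (fun _ => 1) p r) p := by
  have hlen : p.length = n + 2 := hp.1
  have hne {s : ℕ} (hs : s < n + 2) (hsr : s ≠ r) :=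
    pt_reflectPeak_of_ne (d := fun _ => 1) (hlen ▸ hs) hsr fun _ => rfl
  have hself : pt (reflectPeak (fun _ => 1) p r) r = ((r : ℝ), (z : ℝ) - 2) := by
    rw [pt_reflectPeak_self (by omega), hz, mul_one]
  have hpos := hpeak.pos
  have hrise := hpeak.rise
  have hfall := hpeak.fall (by omega)
  rw [hz] at hrise hfall
  refine ⟨hq, hp, ⟨⟨hpos, hr, ?_, ?_, ?_⟩, fun hup => ?_⟩, ?_⟩
  · rw [hself]
    simp only [rr]
    push_cast
    ring_nf
  · rw [hne (by omega) (by omega)]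
    simp only [rr, if_true]
    push_cast
    linarith
  · rw [hne (by omega) (by omega)]
    simp only [rr, if_true]
    push_cast
    linarith
  · have hpt := congrArg Prod.snd (hself.symm.trans hup.2.2.1)
    simp only [rr] at hpt
    push_cast at hpt
    linarith
  · convert replace1_reflectPeak (d := fun _ => 1) (p := p) (r := r) (by omega) fun _ => rfl
      using 1
    · rw [hself]
      push_cast
      ring_nf
    · rw [hz]
      push_cast
      ring_nf

theorem exists_loweredTo_A (hik : (i, k) ∈ XA n) (hp : p ∈ pathsA n i k)
    (hp' : p' ∈ pathsA n i k) (hbelow : WeaklyBelow p p') (hne : p ≠ p') :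
    ∃ jl ∈ W (.A n), ∃ q, LoweredTo (.A n) i k jl.1 jl.2 q p ∧ WeaklyBelow q p' := by
  obtain ⟨hpath, hstart, hend⟩ := mem_pathsA_iff.1 hp
  obtain ⟨hpath', hstart', hend'⟩ := mem_pathsA_iff.1 hp'
  obtain ⟨r, hpeak, hq, hlt, hqbelow⟩ := hpath.exists_reflectPeak_weaklyBelow hpath'
    (hstart.trans hstart'.symm) (fun _ _ => rfl) (fun _ _ => le_rfl) hbelow hne
  have hpos : 0 < r := hpeak.pos
  have hrn : r ≠ n + 1 := fun h => hlt.ne (by rw [h, hend, hend'])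
  have hr : r ≤ n := by have := hpeak.le; omega
  obtain ⟨e, he⟩ := hpath.exists_snd_eq (c := 1) hpeak.le fun _ _ => rfl
  have hz : pt p r = ((r : ℝ), ((i + k + r - 2 * e : ℤ) : ℝ)) :=
    Prod.ext (hpath.fst_pt r hpeak.le) (by rw [he, hstart]; push_cast; ring)
  have hfix {s : ℕ} (hs : s ≤ n + 1) (hsr : s ≠ r) :=
    pt_reflectPeak_of_ne (d := fun _ => 1) (hpath.lt_length hs) hsr fun _ => rfl
  have hqmem : reflectPeak (fun _ => 1) p r ∈ pathsA n i k :=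
    mem_pathsA_iff.2 ⟨hq, by rw [hfix (by omega) hpos.ne, hstart],
      by rw [hfix le_rfl hrn.symm, hend]⟩
  refine ⟨(r, i + k + r - 2 * e - 1), ⟨hpos, hr, ?_⟩, _,
    loweredTo_reflectPeak_A hp hqmem hpeak hr hz, hqbelow⟩
  have hodd : ((i : ℤ) - k) % 2 = 1 := hik.2.2
  simp only [rr]
  omega

end TypeA

/-! ### Spin paths of type `B` -/

/-- The abscissa of the `r`-th point of a spin path in `𝒫_{n,l}`. -/
def spinX (n : ℕ) (l : ℤ) (r : ℕ) : ℤ :=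
  if r = n then 2 * n - 1 else if l % 4 = 3 then 2 * r else 4 * n - 2 - 2 * r

/-- The size of the `r`-th step of a spin path of type `B_n`. -/
noncomputable def spinStep (n : ℕ) (ε : ℝ) (r : ℕ) : ℝ :=
  if r + 1 = n then 1 + ε else 2

theorem spinX_self (n : ℕ) (l : ℤ) : spinX n l n = 2 * n - 1 :=
  if_pos rfl

theorem spinX_injOn (n : ℕ) (l : ℤ) : Set.InjOn (spinX n l) (Set.Iic n) := by
  intro r hr s hs h
  simp only [Set.mem_Iic, spinX] at hr hs h
  split_ifs at h <;> omega

theorem eq_of_spinX_eq_spinX {n r s : ℕ} {l l' : ℤ} (hl : l % 2 = 1) (hll' : (l' - l) % 4 = 2)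
    (hr : r ≤ n) (hs : s ≤ n) (h : spinX n l r = spinX n l' s) : r = n ∧ s = n := by
  simp only [spinX] at h
  split_ifs at h <;> omega

theorem iotaB_of_lt {n j : ℕ} {l w : ℤ} (hl : l % 2 = 1) (hj : j < n)
    (hw : 4 ∣ w - (l + 2 * n - 1 + 2 * j)) : iotaB n (j, w) = (spinX n l j, w) := by
  simp only [iotaB, spinX, if_neg hj.ne]
  split_ifs <;> first | rfl | omega

theorem spinStep_of_succ_lt {n r : ℕ} (ε : ℝ) (h : r + 1 < n) : spinStep n ε r = 2 :=
  if_neg h.ne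

theorem spinStep_of_succ_eq {n r : ℕ} (ε : ℝ) (h : r + 1 = n) : spinStep n ε r = 1 + ε :=
  if_pos h

theorem spinStep_le_two {n r : ℕ} {ε : ℝ} (hε : ε ≤ 1) : spinStep n ε r ≤ 2 := by
  unfold spinStep
  split_ifs <;> linarith

theorem spinStep_pos {n r : ℕ} {ε : ℝ} (hε : -1 < ε) : 0 < spinStep n ε r := by
  unfold spinStep
  split_ifs <;> linarith

section Spin

variable {n r : ℕ} {ε : ℝ} {l : ℤ} {a : List (ℝ × ℝ)}

theorem isStepPath_of_mem_pathsBspin (hε : -1 ≤ ε) (ha : a ∈ pathsBspin n ε l) :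
    IsStepPath (fun r => spinX n l r) (spinStep n ε) n a := by
  obtain ⟨hlen, hfst, hfst_last, -, hstep, hstep_last⟩ := ha
  refine ⟨hlen, fun r hr => ?_, fun r hr => ?_⟩
  · rcases hr.eq_or_lt with rfl | hrn
    · simp only [hfst_last, spinX_self]
      push_cast
      rfl
    · simp only [spinX, if_neg hrn.ne]
      split_ifs at hfst ⊢ <;> rw [hfst r hrn] <;> push_cast <;> rfl
  · rcases (Nat.succ_le_of_lt hr).eq_or_lt with rfl | hrn
    · rw [spinStep_of_succ_eq ε rfl]
      exact (abs_eq (by linarith)).2 hstep_last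
    · rw [spinStep_of_succ_lt ε hrn]
      exact (abs_eq zero_le_two).2 (hstep r hrn)

theorem mem_pathsBspin_of_isStepPath (hn : 0 < n)
    (ha : IsStepPath (fun r => spinX n l r) (spinStep n ε) n a)
    (hstart : (pt a 0).2 = l + 2 * n - 1) : a ∈ pathsBspin n ε l := by
  obtain ⟨hlen, hfst, hstep⟩ := ha
  refine ⟨hlen, ?_, ?_, hstart, fun r hr => ?_, ?_⟩
  · split_ifs with hl <;> intro r hr <;> rw [hfst r hr.le] <;>
      simp only [spinX, if_neg hr.ne, hl] <;> push_cast <;> rfl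
  · rw [hfst n le_rfl, spinX_self]
    push_cast
    rfl
  · exact eq_or_eq_neg_of_abs_eq ((hstep r (by omega)).trans (spinStep_of_succ_lt ε hr))
  · obtain ⟨t, rfl⟩ := Nat.exists_eq_succ_of_ne_zero hn.ne'
    exact eq_or_eq_neg_of_abs_eq ((hstep t t.lt_succ_self).trans (spinStep_of_succ_eq ε rfl))

theorem exists_snd_eq_of_mem_pathsBspin (hε : -1 ≤ ε) (ha : a ∈ pathsBspin n ε l) (hr : r < n) :
    ∃ z : ℤ, (pt a r).2 = z ∧ 4 ∣ z - (l + 2 * n - 1 + 2 * r) := by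
  obtain ⟨e, he⟩ := (isStepPath_of_mem_pathsBspin hε ha).exists_snd_eq hr.le
    fun s hs => spinStep_of_succ_lt ε (by omega)
  refine ⟨l + 2 * n - 1 + 2 * r - 4 * e, ?_, ⟨-e, by ring⟩⟩
  rw [he, ha.2.2.2.1]
  push_cast
  ring

theorem eq_pt_of_mem_pathsBspin (hε : -1 ≤ ε) (ha : a ∈ pathsBspin n ε l) (hr : r ≤ n)
    {x : ℝ × ℝ} (hx : x ∈ a) (hfst : x.1 = spinX n l r) : x = pt a r := by
  have hpath := isStepPath_of_mem_pathsBspin hε ha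
  obtain ⟨s, hs, rfl⟩ := mem_iff_exists_pt.1 hx
  have hsn := hpath.le_of_lt_length hs
  rw [hpath.fst_pt s hsn, Int.cast_inj] at hfst
  rw [spinX_injOn n l hsn hr hfst]

end Spin

/-! ### Lowering moves in type `B` -/

/-- The lists `p` and `p'` are related by the lowering move of type `B_n` at `(j, m)`, without the
requirement that they be paths. Unlike `LoweredTo` this is stable under appending further points
and under reversal, so that a vector path can be lowered in either of its halves. -/
def IsLoweringB (n : ℕ) (ε : ℝ) (j : ℕ) (m : ℤ) (p p' : List (ℝ × ℝ)) : Prop :=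
  CanLower (.B n ε) p j m ∧
    if j = n then
      Replace1 p p' (2 * (n : ℝ) - 1, (m : ℝ) - 1 - ε) (2 * (n : ℝ) - 1, (m : ℝ) + 1 + ε)
    else if j = n - 1 then
      Replace2 p p'
        (((iotaB n (j, m - 2)).1 : ℝ), (m : ℝ) - 2) (((iotaB n (j, m - 2)).1 : ℝ), (m : ℝ) + 2)
        (2 * (n : ℝ) - 1, (m : ℝ) - 1 + ε) (2 * (n : ℝ) - 1, (m : ℝ) + 1 - ε)
    else
      Replace1 p p'
        (((iotaB n (j, m - 2)).1 : ℝ), (m : ℝ) - 2) (((iotaB n (j, m - 2)).1 : ℝ), (m : ℝ) + 2)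

section LoweringB

variable {n j s : ℕ} {ε : ℝ} {m : ℤ} {p p' : List (ℝ × ℝ)}

theorem Cp_B_reverse (n : ℕ) (ε : ℝ) (p : List (ℝ × ℝ)) (up : Bool) :
    Cp (.B n ε) p.reverse up = Cp (.B n ε) p up := by
  have hsub (p : List (ℝ × ℝ)) : Cp (.B n ε) p up ⊆ Cp (.B n ε) p.reverse up := by
    rintro ⟨j, m⟩ ⟨hX, ⟨r, hr, hr', hpt, h0, hmid, hend, hcorner⟩ | ⟨hj, hlast⟩⟩
    · have hpred : pt p.reverse (p.length - 1 - r - 1) = pt p (r + 1) := by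
        rw [Nat.sub_sub _ r 1, pt_reverse_sub hr']
      have hsucc : pt p.reverse (p.length - 1 - r + 1) = pt p (r - 1) := by
        rw [show p.length - 1 - r + 1 = p.length - 1 - (r - 1) by omega, pt_reverse_sub (by omega)]
      refine ⟨hX, .inl ⟨p.length - 1 - r, by omega, by rw [List.length_reverse]; omega, ?_⟩⟩
      rw [hpred, hsucc, pt_reverse_sub (by omega)]
      refine ⟨hpt, h0, hmid, hend, ?_⟩
      split_ifs at hcorner ⊢ <;> exact hcorner.symm
    · refine ⟨hX, .inr ⟨hj, ?_⟩⟩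
      simpa only [List.mem_reverse] using hlast
  refine subset_antisymm ?_ (hsub p)
  simpa only [List.reverse_reverse] using hsub p.reverse

theorem IsLoweringB.reverse (h : IsLoweringB n ε j m p p') :
    IsLoweringB n ε j m p.reverse p'.reverse := by
  obtain ⟨hlow, hrep⟩ := h
  refine ⟨by rwa [CanLower, Cp_B_reverse], ?_⟩
  split_ifs at hrep ⊢
  exacts [hrep.reverse, hrep.reverse, hrep.reverse]

theorem iotaB_snd (n j : ℕ) (m : ℤ) : (iotaB n (j, m)).2 = m := by
  unfold iotaB
  split_ifs <;> rfl

theorem canLower_B_of_lt (hj : j < n) (hX : (j, m - 2) ∈ XB n) (hs : 1 ≤ s)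
    (hs' : s + 1 < p.length) (hpt : pt p s = (((iotaB n (j, m - 2)).1 : ℝ), (m : ℝ) - 2))
    (hpred : (pt p s).2 < (pt p (s - 1)).2) (hsucc : (pt p s).2 < (pt p (s + 1)).2)
    (hno : (((iotaB n (j, m - 2)).1 : ℝ), (m : ℝ) + 2) ∉ p) : CanLower (.B n ε) p j m := by
  have hcol : (iotaB n (j, m + 2)).1 = (iotaB n (j, m - 2)).1 := by
    simp only [iotaB, if_neg hj.ne]
    split_ifs <;> first | rfl | omega
  obtain ⟨h0, hmid, hend⟩ : (iotaB n (j, m - 2)).1 ≠ 0 ∧ (iotaB n (j, m - 2)).1 ≠ 2 * n - 1 ∧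
      (iotaB n (j, m - 2)).1 ≠ 4 * n - 2 := by
    have hj0 : 1 ≤ j := hX.elim (fun h => absurd h.1 hj.ne) And.left
    simp only [iotaB, if_neg hj.ne]
    split_ifs <;> dsimp only <;> omega
  simp only [CanLower, rr, if_neg hj.ne, Nat.cast_ofNat]
  refine ⟨⟨hX, .inl ⟨s, hs, hs', ?_, h0, hmid, hend, hpred, hsucc⟩⟩, ?_⟩
  · rw [hpt, iotaB_snd]
    push_cast
    rfl
  · rintro ⟨-, ⟨t, -, ht, hpt', -⟩ | ⟨hjn, -⟩⟩
    · rw [hcol, iotaB_snd] at hpt'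
      refine hno (mem_iff_exists_pt.2 ⟨t, by omega, hpt'.trans ?_⟩)
      push_cast
      rfl
    · exact hj.ne hjn

theorem canLower_B_self (hX : (n, m - 1) ∈ XB n)
    (hmem : (2 * (n : ℝ) - 1, (m : ℝ) - 1 - ε) ∈ p)
    (hno : (2 * (n : ℝ) - 1, (m : ℝ) - 1 + ε) ∉ p)
    (hno' : (2 * (n : ℝ) - 1, (m : ℝ) + 1 - ε) ∉ p) : CanLower (.B n ε) p n m := by
  simp only [CanLower, rr, if_pos, Nat.cast_one]
  refine ⟨⟨hX, .inr ⟨rfl, ?_⟩⟩, ?_⟩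
  · simp only [if_true]
    push_cast
    exact ⟨hmem, hno⟩
  · rintro ⟨-, ⟨t, -, -, -, -, hmid, -⟩ | ⟨-, hup⟩⟩
    · exact hmid (by rw [iotaB, if_pos rfl])
    · simp only [if_true] at hup
      push_cast at hup
      exact hno' hup.1

end LoweringB

section SpinLowering

variable {n r : ℕ} {ε : ℝ} {l : ℤ} {a c : List (ℝ × ℝ)}

theorem pt_reflectPeak_of_lt {z : ℤ} (hε : -1 ≤ ε) (ha : a ∈ pathsBspin n ε l) (hpos : 0 < r)
    (hr : r < n) (hz : (pt a r).2 = z) :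
    pt (reflectPeak (spinStep n ε) a r) r = ((spinX n l r : ℝ), (z : ℝ) - 4) := by
  have hpath := isStepPath_of_mem_pathsBspin hε ha
  rw [pt_reflectPeak_self (hpath.lt_length hr.le), hpath.fst_pt r hr.le, hz,
    spinStep_of_succ_lt ε (by omega)]
  norm_num

theorem canLower_reflectPeak_of_lt {z : ℤ} (hε : -1 < ε) (hl : l % 2 = 1)
    (ha : a ∈ pathsBspin n ε l) (hpeak : IsPeak (spinStep n ε) n a r) (hr : r < n)
    (hz : (pt a r).2 = z) (hzl : 4 ∣ z - (l + 2 * n - 1 + 2 * r))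
    (hno : pt a r ∉ reflectPeak (spinStep n ε) a r ++ c) :
    CanLower (.B n ε) (reflectPeak (spinStep n ε) a r ++ c) r (z - 2) := by
  have hpath := isStepPath_of_mem_pathsBspin hε.le ha
  have hpos := hpeak.pos
  have hcol : (iotaB n (r, z - 2 - 2)).1 = spinX n l r :=
    congrArg Prod.fst (iotaB_of_lt hl hr (by omega))
  have hlen {s : ℕ} (hs : s ≤ n) : s < (reflectPeak (spinStep n ε) a r).length := by
    rw [length_reflectPeak]
    exact hpath.lt_length hs
  refine canLower_B_of_lt (s := r) hr (.inr ⟨hpos, hr, by dsimp only; omega⟩) hpos ?_ ?_ ?_ ?_ ?_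
  · rw [List.length_append]
    have := hlen (Nat.succ_le_of_lt hr)
    omega
  · rw [pt_append_left (hlen hr.le), pt_reflectPeak_of_lt hε.le ha hpos hr hz, hcol]
    push_cast
    ring_nf
  · rw [pt_append_left (hlen hr.le), pt_append_left (hlen (by omega)), ← sub_pos,
      hpeak.reflectPeak_fall (hpath.lt_length hr.le)]
    exact spinStep_pos hε
  · rw [pt_append_left (hlen hr.le), pt_append_left (hlen hr), ← sub_pos,
      hpeak.reflectPeak_rise hr (hpath.lt_length hr)]
    exact spinStep_pos hε
  · have hpt : pt a r = (((iotaB n (r, z - 2 - 2)).1 : ℝ), ((z - 2 : ℤ) : ℝ) + 2) :=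
      Prod.ext (by rw [hpath.fst_pt r hr.le, hcol]) (by rw [hz]; push_cast; ring)
    rwa [← hpt]

theorem isLoweringB_reflectPeak_of_lt {z : ℤ} (hε : -1 < ε) (hl : l % 2 = 1)
    (ha : a ∈ pathsBspin n ε l) (hpeak : IsPeak (spinStep n ε) n a r) (hr : r < n)
    (hz : (pt a r).2 = z) (hzl : 4 ∣ z - (l + 2 * n - 1 + 2 * r))
    (hno : pt a r ∉ reflectPeak (spinStep n ε) a r ++ c) :
    IsLoweringB n ε r (z - 2) (reflectPeak (spinStep n ε) a r ++ c) (a ++ c) := by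
  refine ⟨canLower_reflectPeak_of_lt hε hl ha hpeak hr hz hzl hno, ?_⟩
  have hpath := isStepPath_of_mem_pathsBspin hε.le ha
  have hcol : (iotaB n (r, z - 2 - 2)).1 = spinX n l r :=
    congrArg Prod.fst (iotaB_of_lt hl hr (by omega))
  have hpos := hpeak.pos
  have hapt : pt a r = ((spinX n l r : ℝ), ((z - 2 : ℤ) : ℝ) + 2) :=
    Prod.ext (hpath.fst_pt r hr.le) (by rw [hz]; push_cast; ring)
  have hqpt : pt (reflectPeak (spinStep n ε) a r) r =
      ((spinX n l r : ℝ), ((z - 2 : ℤ) : ℝ) - 2) := by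
    rw [pt_reflectPeak_of_lt hε.le ha hpos hr hz]
    push_cast
    ring_nf
  rw [if_neg hr.ne, hcol, ← hapt, ← hqpt]
  split_ifs with hrn
  · have hrn' : r + 1 = n := by omega
    have hfall := hpeak.fall hr
    rw [hz, spinStep_of_succ_eq ε hrn'] at hfall
    have hasucc : pt a (r + 1) = (2 * (n : ℝ) - 1, ((z - 2 : ℤ) : ℝ) + 1 - ε) :=
      Prod.ext (by rw [hrn', ha.2.2.1]) (by push_cast; linarith)
    have hqsucc : pt (reflectPeak (spinStep n ε) a r) (r + 1) =
        (2 * (n : ℝ) - 1, ((z - 2 : ℤ) : ℝ) - 1 + ε) := by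
      rw [pt_reflectPeak_succ (hpath.lt_length hr), hasucc, spinStep_of_succ_eq ε hrn',
        spinStep_of_succ_lt ε (by omega)]
      exact Prod.ext rfl (by dsimp only; ring)
    rw [← hasucc, ← hqsucc]
    exact (replace2_reflectPeak (hpath.lt_length hr)).append_right c
  · refine (replace1_reflectPeak (hpath.lt_length hr.le) fun _ => ?_).append_right c
    rw [spinStep_of_succ_lt ε (by omega), spinStep_of_succ_lt ε (by omega)]

theorem isLoweringB_reflectPeak_self {z : ℤ} (ha : a ∈ pathsBspin n ε l)
    (hpeak : IsPeak (spinStep n ε) n a n)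
    (hz : (pt a n).2 = z + 1 + ε) (hzl : z % 2 = 0)
    (hno : (2 * (n : ℝ) - 1, (z : ℝ) - 1 + ε) ∉ reflectPeak (spinStep n ε) a n ++ c)
    (hno' : (2 * (n : ℝ) - 1, (z : ℝ) + 1 - ε) ∉ reflectPeak (spinStep n ε) a n ++ c) :
    IsLoweringB n ε n z (reflectPeak (spinStep n ε) a n ++ c) (a ++ c) := by
  have hlen : a.length = n + 1 := ha.1
  have hpos : 0 < n := hpeak.pos
  have hapt : pt a n = (2 * (n : ℝ) - 1, (z : ℝ) + 1 + ε) := Prod.ext ha.2.2.1 hz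
  have hqpt : pt (reflectPeak (spinStep n ε) a n) n = (2 * (n : ℝ) - 1, (z : ℝ) - 1 - ε) := by
    rw [pt_reflectPeak_self (by omega), hapt, spinStep_of_succ_eq ε (by omega)]
    exact Prod.ext rfl (by dsimp only; ring)
  refine ⟨canLower_B_self (.inl ⟨rfl, by dsimp only; omega⟩) ?_ hno hno', ?_⟩
  · rw [← hqpt]
    exact List.mem_append_left c (pt_mem (by rw [length_reflectPeak]; omega))
  · rw [if_pos rfl, ← hapt, ← hqpt]
    exact (replace1_reflectPeak (by omega) (by omega)).append_right c

end SpinLowering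

/-- No point of `c` lies in the closed region between the path `q` and the path `a` below it, both
of which are spin paths in `𝒫_{n,l}`. -/
def AvoidsBetween (n : ℕ) (l : ℤ) (q a c : List (ℝ × ℝ)) : Prop :=
  ∀ x ∈ c, ∀ s ≤ n, x.1 = spinX n l s → x.2 ∉ Set.Icc (pt q s).2 (pt a s).2

section Raising

variable {n r : ℕ} {ε : ℝ} {l l' : ℤ} {a a' b c q : List (ℝ × ℝ)}

theorem AvoidsBetween.eq_pt_of_mem_append (hc : AvoidsBetween n l q a c) (hε : -1 ≤ ε)
    (hq : q ∈ pathsBspin n ε l) (hr : r ≤ n) {x : ℝ × ℝ} (hx : x ∈ q ++ c)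
    (hfst : x.1 = spinX n l r) (hsnd : x.2 ∈ Set.Icc (pt q r).2 (pt a r).2) : x = pt q r :=
  (List.mem_append.1 hx).elim (eq_pt_of_mem_pathsBspin hε hq hr · hfst)
    fun hxc => absurd hsnd (hc x hxc r hr hfst)

theorem exists_isLoweringB_reflectPeak (hε : 0 < ε) (hl : l % 2 = 1) (ha : a ∈ pathsBspin n ε l)
    (hpeak : IsPeak (spinStep n ε) n a r) (hq : reflectPeak (spinStep n ε) a r ∈ pathsBspin n ε l) :
    ∃ m, (r, m) ∈ W (.B n ε) ∧ ∀ c, AvoidsBetween n l (reflectPeak (spinStep n ε) a r) a c →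
      IsLoweringB n ε r m (reflectPeak (spinStep n ε) a r ++ c) (a ++ c) := by
  have hε' : -1 < ε := by linarith
  have hpath := isStepPath_of_mem_pathsBspin hε'.le ha
  have hpos := hpeak.pos
  have hqr : (pt (reflectPeak (spinStep n ε) a r) r).2 = (pt a r).2 - 2 * spinStep n ε (r - 1) :=
    congrArg Prod.snd (pt_reflectPeak_self (hpath.lt_length hpeak.le))
  rcases hpeak.le.eq_or_lt with rfl | hr
  · obtain ⟨z, hz, hzl⟩ := exists_snd_eq_of_mem_pathsBspin hε'.le ha (Nat.sub_lt hpos one_pos)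
    have hrise := hpeak.rise
    rw [spinStep_of_succ_eq ε (Nat.sub_add_cancel hpos)] at hrise hqr
    have hno {t : ℝ} (ht : t ∈ Set.Ioc ((z : ℝ) - 1 - ε) (z + 1 + ε)) {c : List (ℝ × ℝ)}
        (hc : AvoidsBetween r l (reflectPeak (spinStep r ε) a r) a c) :
        (2 * (r : ℝ) - 1, t) ∉ reflectPeak (spinStep r ε) a r ++ c := fun hmem => by
      have hpt := hc.eq_pt_of_mem_append hε'.le hq le_rfl hmem
        (by rw [spinX_self]; push_cast; rfl)
        ⟨(by linarith : _ ≤ (z : ℝ) - 1 - ε).trans ht.1.le, ht.2.trans (by linarith)⟩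
      have hsnd : t = _ := congrArg Prod.snd hpt
      linarith [ht.1]
    refine ⟨z, .inl ⟨rfl, ?_⟩, fun c hc =>
      isLoweringB_reflectPeak_self ha hpeak (by linarith) (by omega)
        (hno ⟨by linarith, by linarith⟩ hc) (hno ⟨by linarith, by linarith⟩ hc)⟩
    simp only [rr, if_pos]
    omega
  · obtain ⟨z, hz, hzl⟩ := exists_snd_eq_of_mem_pathsBspin hε'.le ha hr
    rw [spinStep_of_succ_lt ε (by omega)] at hqr
    refine ⟨z - 2, .inr ⟨hpos, hr, ?_⟩, fun c hc =>
      isLoweringB_reflectPeak_of_lt hε' hl ha hpeak hr hz hzl fun hmem => ?_⟩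
    · simp only [rr, if_neg hr.ne]
      omega
    · have hpt := hc.eq_pt_of_mem_append hε'.le hq hr.le hmem (hpath.fst_pt r hr.le)
        ⟨by linarith, le_rfl⟩
      rw [hpt] at hqr
      linarith

theorem exists_isLoweringB_append (hε : 0 < ε) (hε1 : ε ≤ 1) (hl : l % 2 = 1)
    (ha : a ∈ pathsBspin n ε l) (ha' : a' ∈ pathsBspin n ε l) (hbelow : WeaklyBelow a a')
    (hne : a ≠ a') :
    ∃ q ∈ pathsBspin n ε l, WeaklyBelow q a' ∧ WeaklyBelow a q ∧ ∃ jl ∈ W (.B n ε),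
      ∀ c, AvoidsBetween n l q a c → IsLoweringB n ε jl.1 jl.2 (q ++ c) (a ++ c) := by
  have hε' : -1 < ε := by linarith
  have hpath := isStepPath_of_mem_pathsBspin hε'.le ha
  obtain ⟨r, hpeak, hqpath, -, hqa'⟩ := hpath.exists_reflectPeak_weaklyBelow
    (isStepPath_of_mem_pathsBspin hε'.le ha') (ha.2.2.2.1.trans ha'.2.2.2.1.symm)
    (fun s => spinStep_of_succ_lt ε) (fun s _ => spinStep_le_two hε1) hbelow hne
  have hpos := hpeak.pos
  have hq : reflectPeak (spinStep n ε) a r ∈ pathsBspin n ε l := by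
    refine mem_pathsBspin_of_isStepPath (hpos.trans_le hpeak.le) hqpath ?_
    rw [pt_reflectPeak_of_ne (hpath.lt_length n.zero_le) hpos.ne (by omega), ha.2.2.2.1]
  obtain ⟨m, hm, hlow⟩ := exists_isLoweringB_reflectPeak hε hl ha hpeak hq
  refine ⟨_, hq, hqa', weaklyBelow_reflectPeak (spinStep_pos hε').le fun hr => ?_, (r, m), hm, hlow⟩
  have hrn : r < n := hpath.le_of_lt_length hr
  rw [spinStep_of_succ_lt ε (r := r - 1) (by omega)]
  exact spinStep_le_two hε1

theorem avoidsBetween_reverse (hε : -1 ≤ ε) (hl : l % 2 = 1) (hll' : (l' - l) % 4 = 2)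
    (hb : b ∈ pathsBspin n ε l') (hbn : (pt b n).2 ∉ Set.Icc (pt q n).2 (pt a n).2) :
    AvoidsBetween n l q a b.reverse := by
  have hpath := isStepPath_of_mem_pathsBspin hε hb
  intro x hx s hs hfst
  obtain ⟨t, ht, rfl⟩ := mem_iff_exists_pt.1 (List.mem_reverse.1 hx)
  have htn := hpath.le_of_lt_length ht
  rw [hpath.fst_pt t htn, Int.cast_inj] at hfst
  obtain ⟨rfl, rfl⟩ := eq_of_spinX_eq_spinX hl hll' hs htn hfst.symm
  exact hbn

end Raising

section TypeB

variable {n i : ℕ} {ε : ℝ} {k l l' : ℤ} {a a' b b' p p' : List (ℝ × ℝ)}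

theorem exists_loweredTo_B_spin (hε : 0 < ε) (hε1 : ε ≤ 1) (hk : k % 2 = 1)
    (hp : p ∈ pathsBspin n ε k) (hp' : p' ∈ pathsBspin n ε k) (hbelow : WeaklyBelow p p')
    (hne : p ≠ p') :
    ∃ jl ∈ W (.B n ε), ∃ q, LoweredTo (.B n ε) n k jl.1 jl.2 q p ∧ WeaklyBelow q p' := by
  have hP : P (.B n ε) n k = pathsBspin n ε k := if_pos rfl
  obtain ⟨q, hq, hqp', -, jl, hjl, hlow⟩ := exists_isLoweringB_append hε hε1 hk hp hp' hbelow hne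
  have hlow' := hlow [] fun x hx => absurd hx List.not_mem_nil
  rw [List.append_nil, List.append_nil] at hlow'
  exact ⟨jl, hjl, q, ⟨hP ▸ hq, hP ▸ hp, hlow'⟩, hqp'⟩

theorem exists_isLoweringB_append_reverse (hε : 0 < ε) (hε1 : ε ≤ 1) (hl : l % 2 = 1)
    (hll' : (l' - l) % 4 = 2) (ha : a ∈ pathsBspin n ε l) (ha' : a' ∈ pathsBspin n ε l)
    (hb : b ∈ pathsBspin n ε l') (hb' : b' ∈ pathsBspin n ε l')
    (hab : (pt b n).2 < (pt a n).2) (hab' : (pt b' n).2 < (pt a' n).2)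
    (hbelow : WeaklyBelow (a ++ b.reverse) (a' ++ b'.reverse))
    (hne : a ++ b.reverse ≠ a' ++ b'.reverse) :
    ∃ jl ∈ W (.B n ε), ∃ c ∈ pathsBspin n ε l, ∃ d ∈ pathsBspin n ε l',
      (pt d n).2 < (pt c n).2 ∧ IsLoweringB n ε jl.1 jl.2 (c ++ d.reverse) (a ++ b.reverse) ∧
      WeaklyBelow (c ++ d.reverse) (a' ++ b'.reverse) := by
  obtain ⟨haa', hbb'⟩ := (weaklyBelow_append_iff (ha.1.trans ha'.1.symm)).1 hbelow
  rw [weaklyBelow_reverse_iff] at hbb'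
  have hε' : -1 ≤ ε := by linarith
  rcases eq_or_ne b b' with rfl | hb_ne
  · obtain ⟨q, hq, hqa', -, jl, hjl, hlow⟩ := exists_isLoweringB_append hε hε1 hl ha ha' haa'
      fun h => hne (h ▸ rfl)
    have hbq : (pt b n).2 < (pt q n).2 := hab'.trans_le (hqa'.2 n (by rw [hq.1]; omega))
    exact ⟨jl, hjl, q, hq, b, hb, hbq,
      hlow _ (avoidsBetween_reverse hε' hl hll' hb fun h => hbq.not_ge h.1),
      (weaklyBelow_append_iff (hq.1.trans ha'.1.symm)).2 ⟨hqa', weaklyBelow_reverse_iff.2 hbb'⟩⟩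
  · obtain ⟨q, hq, hqb', hbq, jl, hjl, hlow⟩ :=
      exists_isLoweringB_append hε hε1 (by omega) hb hb' hbb' hb_ne
    have hqb : (pt q n).2 ≤ (pt b n).2 := hbq.2 n (by rw [hb.1]; omega)
    have hrev := (hlow _ (avoidsBetween_reverse hε' (by omega) (by omega) ha
      fun h => hab.not_ge h.2)).reverse
    simp only [List.reverse_append, List.reverse_reverse] at hrev
    exact ⟨jl, hjl, a, ha, q, hq, hqb.trans_lt hab, hrev,
      (weaklyBelow_append_iff (ha.1.trans ha'.1.symm)).2 ⟨haa', weaklyBelow_reverse_iff.2 hqb'⟩⟩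

theorem exists_loweredTo_B (hε : 0 < ε) (hε1 : ε ≤ 1) (hik : (i, k) ∈ XB n)
    (hp : p ∈ pathsB n ε i k) (hp' : p' ∈ pathsB n ε i k) (hbelow : WeaklyBelow p p')
    (hne : p ≠ p') :
    ∃ jl ∈ W (.B n ε), ∃ q, LoweredTo (.B n ε) i k jl.1 jl.2 q p ∧ WeaklyBelow q p' := by
  rcases hik with ⟨rfl, hk⟩ | ⟨-, hin, hk⟩
  · rw [pathsB, if_pos rfl] at hp hp'
    exact exists_loweredTo_B_spin hε hε1 hk hp hp' hbelow hne
  · have hpmem : p ∈ pathsB n ε i k := hp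
    rw [pathsB, if_neg (show i ≠ n from hin.ne)] at hp hp'
    obtain ⟨a, b, ha, hb, rfl, -, hab⟩ := hp
    obtain ⟨a', b', ha', hb', rfl, -, hab'⟩ := hp'
    dsimp only at hk hin
    obtain ⟨jl, hjl, c, hc, d, hd, hdc, hlow, hbelow'⟩ :=
      exists_isLoweringB_append_reverse hε hε1 (by omega) (by omega) ha ha' hb hb'
        (sub_pos.1 hab) (sub_pos.1 hab') hbelow hne
    refine ⟨jl, hjl, _, ⟨?_, hpmem, hlow⟩, hbelow'⟩
    change _ ∈ pathsB n ε i k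
    rw [pathsB, if_neg (show i ≠ n from hin.ne)]
    exact ⟨c, d, hc, hd, rfl, hc.2.2.1.trans hd.2.2.1.symm, sub_pos.2 hdc⟩

end TypeB

theorem stmt3_general (S : Setting) (hS : ∀ n ε, S = .B n ε → 0 < ε ∧ ε ≤ 1) (i : ℕ) (k : ℤ)
    (hik : (i, k) ∈ X S) (p p' : List (ℝ × ℝ)) (hp : p ∈ P S i k) (hp' : p' ∈ P S i k)
    (hwb : WeaklyBelow p p') (hne : p ≠ p') :
    ∃ jl ∈ W S, ∃ q : List (ℝ × ℝ),
      LoweredTo S i k jl.1 jl.2 q p ∧ WeaklyBelow q p' := by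
  cases S with
  | A n => exact exists_loweredTo_A hik hp hp' hwb hne
  | B n ε =>
    obtain ⟨hε, hε1⟩ := hS n ε rfl
    exact exists_loweredTo_B hε hε1 hik hp hp' hwb hne

/-- if `p, p' ∈ 𝒫_{i,k}`, `p` is weakly below `p'` and `p ≠ p'`, then there is
`(j,ℓ) ∈ W` such that `p` can be raised at `(j,ℓ)` and the raised path `p𝒜_{j,ℓ}` (i.e. the
path `q` with `q𝒜_{j,ℓ}⁻¹ = p`) is weakly below `p'`. -/
theorem stmt3 (S : Setting) (hS : S.valid) (i : ℕ) (k : ℤ) (hik : (i, k) ∈ X S)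
    (p p' : List (ℝ × ℝ)) (hp : p ∈ P S i k) (hp' : p' ∈ P S i k)
    (hwb : WeaklyBelow p p') (hne : p ≠ p') :
    ∃ jl ∈ W S, ∃ q : List (ℝ × ℝ),
      LoweredTo S i k jl.1 jl.2 q p ∧ WeaklyBelow q p' :=
  stmt3_general S (by rintro n ε rfl; exact ⟨hS.2.1, hS.2.2.le.trans one_half_lt_one.le⟩)
    i k hik p p' hp hp' hwb hne

end Paper
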